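/- Let R > 0, α ∈ ℝ ∖ {0}, y_1,…,y_m ∈ ℝ², and let 𝒩, Φ̂ and ρ be the particle counting function, normalized flux and effective coupling. Let I = (z⁻, z⁺) with z⁻ ≥ R be such that 𝒩(z⁻), 𝒩(z⁺) ∈ ℤ, 𝒩(r) ∉ ℤ for r ∈ I, there exists r_q ∈ I with ρ(r_q) = 0, and ρ(r) = |Φ̂(r) − 2q|² on I for a fixed q ∈ ℤ. If for some 0 < C ≤ 1 either |I| ≥ CR or inf_I 𝒩' ≥ (C²/π) sup_I 𝒩' (with 𝒩'(r) := Σ_l f(|y_l|, r)), then the weighted mean ρ̄_I := (∫_I ρ(r) r^{-1} dr)/(∫_I r^{-1} dr) satisfies ρ̄_I ≥ α² C⁴ / (24 π²). (Good intervals, Lemma 4.9.) -/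

import Mathlib

open MeasureTheory Real Set

noncomputable section

/-- The plane `ℝ²`. -/
abbrev Plane : Type := EuclideanSpace ℝ (Fin 2)

/-- The particle counting function `𝒩(r) = Σ_l |B_r(0) ∩ B_R(y_l)| / (πR²)`. -/
def countN (R : ℝ) {m : ℕ} (y : Fin m → Plane) (r : ℝ) : ℝ :=
  ∑ l : Fin m, (volume (Metric.ball (0 : Plane) r ∩ Metric.ball (y l) R)).toReal / (π * R ^ 2)

/-- The effective coupling `ρ(r) = min_{q ∈ ℤ} |Φ̂(r) - 2q|²` for the normalized flux
`Φ̂(r) = α(1 + 2𝒩(r))`. -/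
def rhoFun (α R : ℝ) {m : ℕ} (y : Fin m → Plane) (r : ℝ) : ℝ :=
  sInf {t : ℝ | ∃ q : ℤ, t = (α * (1 + 2 * countN R y r) - 2 * q) ^ 2}

/-- The one-particle profile `f(d,r)`: `2r/R²` for `r ≤ R - d`; `0` for `r > R + d` or
`r < d - R`; and `(2r/(πR²)) arccos((d²+r²-R²)/(2dr))` otherwise, so that
`𝒩'(r) = Σ_l f(|y_l|, r)` is the a.e. derivative of `𝒩`. -/
def profile (R d r : ℝ) : ℝ :=
  if r ≤ R - d then 2 * r / R ^ 2
  else if R + d < r ∨ r < d - R then 0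
  else 2 * r / (π * R ^ 2) * Real.arccos ((d ^ 2 + r ^ 2 - R ^ 2) / (2 * d * r))

/-- `𝒩'(r) = Σ_l f(|y_l|, r)`. -/
def countN' (R : ℝ) {m : ℕ} (y : Fin m → Plane) (r : ℝ) : ℝ :=
  ∑ l : Fin m, profile R ‖y l‖ r

/-!
Write `N = countN R y`, `c = N rq` and `I = (zm, zp)`.  Since `ρ` vanishes at `rq`, one has
`ρ = 4α² (N - c)²` on `I`, so the claim says that the mean of `(N - c)²` with weight `1 / r` is at
least `C⁴ / (96π²)`.  Polar coordinates (`oneN_sub`) show that `N' = countN' R y` really is a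
density of the increasing function `N` on `[R, ∞)`.

*Long intervals* (`deviation_long`).  At a radius where no profile is active, every disc is counted
fully or not at all, so `N` is an integer; hence some profile is active at every point of `I`
(`exists_active`).  A profile dominates a constant times the square root of the distance to the
ends of its support, an interval of length `2R` (`profile_ge`).  On `(a, b) ⊆ I` with `b - a ≤ R`
the supports cannot fit inside, so either one of them contains `[a, b]` or two of them overlap
inside `(a, b)`; in both cases `(N b - N a)² ≥ 2 (b - a)³ / (3π²R³)` (`countN_growth_sq`).  Applied
between `r` and `rq`, this gives a cubic lower bound for `(N - c)²` near `rq`, and by monotonicity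
of `N` a constant one at distance at least `R / 2`.  It remains to integrate over a window around
`rq` of length `L = min |I| R`, on which `1 / r` varies by a factor of at most two, and to use
`C⁴ ≤ C³ ≤ (L / R)³`.

*Short intervals* (`deviation_short`).  If `|I| < R`, then `1 ≤ N zp - N zm ≤ |I| sup N'`, so the
comparison hypothesis gives `inf N' ≥ C² / (π |I|)`.  Hence `|N - c| ≥ C² |r - rq| / (π |I|)`, and
the variance bound `∫ (r - rq)² ≥ |I|³ / 12` together with the factor two for `1 / r` suffices.
-/

/-! ### Area of a disc inside an annulus -/

/-- The contribution of a single particle at `x` to the counting function. -/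
def oneN (R : ℝ) (x : Plane) (r : ℝ) : ℝ :=
  (volume (Metric.ball (0 : Plane) r ∩ Metric.ball x R)).toReal / (π * R ^ 2)

lemma countN_eq_sum (R : ℝ) {m : ℕ} (y : Fin m → Plane) (r : ℝ) :
    countN R y r = ∑ l, oneN R (y l) r := rfl

lemma lt_cos_iff {x θ : ℝ} (hθ : θ ∈ Ioo (-π) π) :
    x < Real.cos θ ↔ θ ∈ Ioo (-Real.arccos x) (Real.arccos x) := by
  rw [mem_Ioo, ← abs_lt, ← Real.cos_abs]
  have h0 := abs_nonneg θ
  have h1 : |θ| < π := abs_lt.2 hθ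
  rcases lt_or_ge x (-1) with hx | hx
  · rw [Real.arccos_of_le_neg_one hx.le]
    exact ⟨fun _ => h1, fun _ => lt_of_lt_of_le hx (Real.neg_one_le_cos _)⟩
  rcases lt_or_ge 1 x with hx' | hx'
  · rw [Real.arccos_of_one_le hx'.le]
    exact ⟨fun h => absurd (Real.cos_le_one |θ|) (by linarith), fun h => absurd h (by linarith)⟩
  · constructor
    · intro h
      have := Real.arccos_lt_arccos hx h (Real.cos_le_one _)
      rwa [Real.arccos_cos h0 h1.le] at this
    · intro h
      have := Real.cos_lt_cos_of_nonneg_of_le_pi h0 (Real.arccos_le_pi x) h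
      rwa [Real.cos_arccos hx hx'] at this

lemma volume_angles (x : ℝ) :
    volume {θ : ℝ | θ ∈ Ioo (-π) π ∧ x < Real.cos θ} = ENNReal.ofReal (2 * Real.arccos x) := by
  have : {θ : ℝ | θ ∈ Ioo (-π) π ∧ x < Real.cos θ} = Ioo (-Real.arccos x) (Real.arccos x) := by
    ext θ
    constructor
    · rintro ⟨h1, h2⟩
      exact (lt_cos_iff h1).1 h2
    · intro h
      have hp := Real.arccos_le_pi x
      have h1 : θ ∈ Ioo (-π) π := ⟨by linarith [h.1], by linarith [h.2]⟩
      exact ⟨h1, (lt_cos_iff h1).2 h⟩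
  rw [this, Real.volume_Ioo]
  congr 1
  ring

lemma polar_mem_ball_iff {R d r θ : ℝ} (hR : 0 < R) (hd : 0 < d) (hr : 0 < r) :
    Complex.polarCoord.symm (r, θ) ∈ Metric.ball (d : ℂ) R ↔
      (d ^ 2 + r ^ 2 - R ^ 2) / (2 * d * r) < Real.cos θ := by
  rw [Metric.mem_ball, dist_eq_norm, ← sq_lt_sq₀ (norm_nonneg _) hR.le, ← Complex.normSq_eq_norm_sq,
    Complex.normSq_apply, div_lt_iff₀ (by positivity)]
  simp only [Complex.polarCoord_symm_apply, Complex.sub_re, Complex.sub_im, Complex.mul_re,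
    Complex.mul_im, Complex.add_re, Complex.add_im, Complex.ofReal_re, Complex.ofReal_im,
    Complex.I_re, Complex.I_im]
  have := Real.sin_sq_add_cos_sq θ
  have e : (r * (Real.cos θ + (Real.sin θ * 0 - 0 * 1)) - 0 * (0 + (Real.sin θ * 1 + 0 * 0)) - d) *
      (r * (Real.cos θ + (Real.sin θ * 0 - 0 * 1)) - 0 * (0 + (Real.sin θ * 1 + 0 * 0)) - d) +
      (r * (0 + (Real.sin θ * 1 + 0 * 0)) + 0 * (Real.cos θ + (Real.sin θ * 0 - 0 * 1)) - 0) *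
      (r * (0 + (Real.sin θ * 1 + 0 * 0)) + 0 * (Real.cos θ + (Real.sin θ * 0 - 0 * 1)) - 0)
      = r ^ 2 * (Real.sin θ ^ 2 + Real.cos θ ^ 2) - 2 * r * d * Real.cos θ + d ^ 2 := by ring
  rw [e, this]
  constructor <;> intro h <;> nlinarith

/-- Polar coordinates: the area of the part of a disc lying in a circular annulus. -/
lemma volume_annulus {R d a b : ℝ} (hR : 0 < R) (hd : 0 < d) (ha : 0 < a) :
    volume ({z : ℂ | ‖z‖ ∈ Ico a b} ∩ Metric.ball (d : ℂ) R) =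
      ∫⁻ r in Ico a b,
        ENNReal.ofReal (2 * r * Real.arccos ((d ^ 2 + r ^ 2 - R ^ 2) / (2 * d * r))) := by
  set S : Set ℂ := {z : ℂ | ‖z‖ ∈ Ico a b} ∩ Metric.ball (d : ℂ) R with hS
  have hSm : MeasurableSet S :=
    (measurable_norm measurableSet_Ico).inter measurableSet_ball
  have hmeas : Measurable (fun p : ℝ × ℝ => Complex.polarCoord.symm p) := by
    simp only [Complex.polarCoord_symm_apply]
    fun_prop
  rw [← lintegral_indicator_one hSm, ← Complex.lintegral_comp_polarCoord_symm,
    show polarCoord.target = Ioi (0 : ℝ) ×ˢ Ioo (-π) π from rfl, Measure.volume_eq_prod, setLIntegral_prod]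
  · rw [← lintegral_indicator measurableSet_Ioi, ← lintegral_indicator measurableSet_Ico]
    refine lintegral_congr fun r => ?_
    by_cases hr : 0 < r
    swap
    · rw [indicator_of_notMem (by simpa using hr), indicator_of_notMem]
      exact fun h => hr (ha.trans_le h.1)
    rw [indicator_of_mem (show r ∈ Ioi 0 from hr)]
    have hn : ∀ θ, ‖Complex.polarCoord.symm (r, θ)‖ = r := fun θ => by
      rw [Complex.norm_polarCoord_symm, abs_of_pos hr]
    by_cases hab : r ∈ Ico a b
    · rw [indicator_of_mem hab]
      set T : Set ℝ := {θ : ℝ | (d ^ 2 + r ^ 2 - R ^ 2) / (2 * d * r) < Real.cos θ} with hT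
      have hm : MeasurableSet T :=
        measurableSet_lt measurable_const Real.continuous_cos.measurable
      have : ∀ θ : ℝ, ENNReal.ofReal r • S.indicator (1 : ℂ → ENNReal) (Complex.polarCoord.symm (r, θ))
          = T.indicator (fun _ => ENNReal.ofReal r) θ := by
        intro θ
        by_cases h : (d ^ 2 + r ^ 2 - R ^ 2) / (2 * d * r) < Real.cos θ
        · rw [indicator_of_mem (show θ ∈ T from h), indicator_of_mem]
          · simp
          · exact ⟨by rw [mem_ofPred_eq, hn]; exact hab, (polar_mem_ball_iff hR hd hr).2 h⟩
        · rw [indicator_of_notMem (show θ ∉ T from h), indicator_of_notMem]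
          · simp
          · exact fun h' => h ((polar_mem_ball_iff hR hd hr).1 h'.2)
      simp only [this]
      rw [lintegral_indicator hm, setLIntegral_const, Measure.restrict_apply hm]
      have e : T ∩ Ioo (-π) π =
          {θ : ℝ | θ ∈ Ioo (-π) π ∧ (d ^ 2 + r ^ 2 - R ^ 2) / (2 * d * r) < Real.cos θ} := by
        ext θ; exact and_comm
      rw [e, volume_angles, ← ENNReal.ofReal_mul hr.le]
      congr 1
      ring
    · rw [indicator_of_notMem hab]
      have : ∀ θ : ℝ, ENNReal.ofReal r • S.indicator (1 : ℂ → ENNReal) (Complex.polarCoord.symm (r, θ))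
          = 0 := by
        intro θ
        rw [indicator_of_notMem]
        · simp
        · intro h'
          have := h'.1
          rw [mem_ofPred_eq, hn] at this
          exact hab this
      simp only [this, lintegral_zero]
  · refine Measurable.aemeasurable ?_
    simp only [smul_eq_mul]
    exact (measurable_fst.ennreal_ofReal).mul ((measurable_one.indicator hSm).comp hmeas)

/-- Rotating the plane moves the centre of a disc onto the positive real axis. -/
lemma volume_plane_eq (R : ℝ) (x : Plane) (s : Set ℝ) :
    volume ({z : Plane | ‖z‖ ∈ s} ∩ Metric.ball x R) =
      volume ({z : ℂ | ‖z‖ ∈ s} ∩ Metric.ball ((‖x‖ : ℝ) : ℂ) R) := by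
  obtain ⟨e, he⟩ : ∃ e : Plane ≃ₗᵢ[ℝ] ℂ, e x = ((‖x‖ : ℝ) : ℂ) := by
    let f : Plane ≃ₗᵢ[ℝ] ℂ := Complex.orthonormalBasisOneI.repr.symm
    by_cases hx : x = 0
    · exact ⟨f, by simp [hx]⟩
    · have hfx : ‖f x‖ = ‖x‖ := f.norm_map x
      have hn : f x ≠ 0 := by simpa using hx
      obtain ⟨u, hu⟩ : ∃ u : Circle, (u : ℂ) * f x = ((‖x‖ : ℝ) : ℂ) := by
        refine ⟨⟨(‖x‖ : ℂ) / f x, ?_⟩, ?_⟩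
        · change (‖x‖ : ℂ) / f x ∈ Metric.sphere 0 1
          rw [mem_sphere_zero_iff_norm, norm_div, hfx]
          simp [hx]
        · exact div_mul_cancel₀ _ hn
      exact ⟨f.trans (rotation u), by simpa [rotation_apply] using hu⟩
  have hm : MeasurePreserving e volume volume := e.measurePreserving
  rw [← hm.measure_preimage_emb e.toHomeomorph.measurableEmbedding]
  congr 1
  ext z
  simp only [mem_inter_iff, mem_ofPred_eq, Metric.mem_ball, mem_preimage, ← he, e.norm_map,
    e.dist_map]

/-! ### The profile as density of the counting function -/

lemma profile_eq {R d r : ℝ} (hR : 0 < R) (hd : 0 < d) (hr : R < r) :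
    profile R d r =
      2 * r / (π * R ^ 2) * Real.arccos ((d ^ 2 + r ^ 2 - R ^ 2) / (2 * d * r)) := by
  have hr0 : 0 < r := hR.trans hr
  unfold profile
  rw [if_neg (by linarith)]
  split_ifs with h
  · rw [Real.arccos_of_one_le, mul_zero]
    rw [le_div_iff₀ (by positivity)]
    have : R < |r - d| := by
      rcases h with h | h
      · exact lt_of_lt_of_le (by linarith) (le_abs_self _)
      · exact lt_of_lt_of_le (by linarith) (neg_le_abs _)
    have h2 := (sq_lt_sq₀ hR.le (abs_nonneg _)).2 this
    rw [sq_abs] at h2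
    nlinarith
  · rfl

lemma profile_zero {R r : ℝ} (hr : R < r) : profile R 0 r = 0 := by
  unfold profile
  rw [if_neg (by linarith), if_pos (Or.inl (by linarith))]

lemma profile_nonneg {R d r : ℝ} (hR : 0 < R) (hd : 0 ≤ d) (hr : R < r) : 0 ≤ profile R d r := by
  rcases hd.eq_or_lt with rfl | hd
  · rw [profile_zero hr]
  · rw [profile_eq hR hd hr]
    have := Real.arccos_nonneg ((d ^ 2 + r ^ 2 - R ^ 2) / (2 * d * r))
    have hr0 : 0 < r := hR.trans hr
    positivity

lemma profile_le {R d r : ℝ} (hR : 0 < R) (hd : 0 ≤ d) (hr : R < r) :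
    profile R d r ≤ 2 * r / R ^ 2 := by
  have hr0 : 0 < r := hR.trans hr
  rcases hd.eq_or_lt with rfl | hd
  · rw [profile_zero hr]; positivity
  · rw [profile_eq hR hd hr]
    calc _ ≤ 2 * r / (π * R ^ 2) * π := by
          gcongr
          exact Real.arccos_le_pi _
      _ = 2 * r / R ^ 2 := by field_simp

lemma profile_intervalIntegrable {R d a b : ℝ} (hR : 0 < R) (hd : 0 ≤ d) (ha : R ≤ a)
    (hab : a ≤ b) : IntervalIntegrable (profile R d) volume a b := by
  rcases hd.eq_or_lt with rfl | hd
  · refine (intervalIntegrable_const (c := (0 : ℝ))).congr ?_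
    intro r hr
    rw [uIoc_of_le hab] at hr
    exact (profile_zero (ha.trans_lt hr.1)).symm
  · have hc : ContinuousOn (fun r => 2 * r / (π * R ^ 2) *
        Real.arccos ((d ^ 2 + r ^ 2 - R ^ 2) / (2 * d * r))) (uIcc a b) := by
      refine ContinuousOn.mul (by fun_prop) (Real.continuous_arccos.comp_continuousOn ?_)
      refine ContinuousOn.div (by fun_prop) (by fun_prop) ?_
      intro r hr
      rw [uIcc_of_le hab] at hr
      have : 0 < r := hR.trans_le (ha.trans hr.1)
      positivity
    refine hc.intervalIntegrable.congr ?_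
    intro r hr
    rw [uIoc_of_le hab] at hr
    exact (profile_eq hR hd (ha.trans_lt hr.1)).symm

/-- `profile R ‖x‖` is the density of `oneN R x` on `[R, ∞)`. -/
lemma oneN_sub {R a b : ℝ} (hR : 0 < R) (x : Plane) (ha : R ≤ a) (hab : a ≤ b) :
    oneN R x b - oneN R x a = ∫ r in a..b, profile R ‖x‖ r := by
  have hsplit : Metric.ball (0 : Plane) b ∩ Metric.ball x R =
      (Metric.ball (0 : Plane) a ∩ Metric.ball x R) ∪
        ({z : Plane | ‖z‖ ∈ Ico a b} ∩ Metric.ball x R) := by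
    ext z
    simp only [mem_inter_iff, mem_union, mem_ball_zero_iff, mem_ofPred_eq, mem_Ico]
    constructor
    · rintro ⟨h1, h2⟩
      rcases lt_or_ge ‖z‖ a with h | h
      · exact Or.inl ⟨h, h2⟩
      · exact Or.inr ⟨⟨h, h1⟩, h2⟩
    · rintro (⟨h, h2⟩ | ⟨h, h2⟩)
      · exact ⟨h.trans_le hab, h2⟩
      · exact ⟨h.2, h2⟩
  have hdisj : Disjoint (Metric.ball (0 : Plane) a ∩ Metric.ball x R)
      ({z : Plane | ‖z‖ ∈ Ico a b} ∩ Metric.ball x R) := by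
    rw [Set.disjoint_left]
    rintro z ⟨h1, _⟩ ⟨h2, _⟩
    rw [mem_ball_zero_iff] at h1
    exact absurd h2.1 (not_le.2 h1)
  have hm : MeasurableSet ({z : Plane | ‖z‖ ∈ Ico a b} ∩ Metric.ball x R) :=
    (measurable_norm measurableSet_Ico).inter measurableSet_ball
  have hfin1 : volume (Metric.ball (0 : Plane) a ∩ Metric.ball x R) ≠ ⊤ :=
    ((measure_mono inter_subset_right).trans_lt measure_ball_lt_top).ne
  have hfin2 : volume ({z : Plane | ‖z‖ ∈ Ico a b} ∩ Metric.ball x R) ≠ ⊤ :=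
    ((measure_mono inter_subset_right).trans_lt measure_ball_lt_top).ne
  have key : (volume ({z : Plane | ‖z‖ ∈ Ico a b} ∩ Metric.ball x R)).toReal =
      π * R ^ 2 * ∫ r in a..b, profile R ‖x‖ r := by
    have ha0 : 0 < a := hR.trans_le ha
    rw [volume_plane_eq, ← intervalIntegral.integral_const_mul]
    rcases (norm_nonneg x).eq_or_lt with hx | hx
    · rw [← hx]
      have : {z : ℂ | ‖z‖ ∈ Ico a b} ∩ Metric.ball (((0 : ℝ)) : ℂ) R = ∅ := by
        rw [Set.eq_empty_iff_forall_notMem]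
        rintro z ⟨h1, h2⟩
        rw [Complex.ofReal_zero, mem_ball_zero_iff] at h2
        exact absurd h1.1 (by linarith)
      rw [this, measure_empty, ENNReal.toReal_zero, intervalIntegral.integral_of_le hab]
      symm
      apply integral_eq_zero_of_ae
      filter_upwards [ae_restrict_mem measurableSet_Ioc] with r hr
      rw [profile_zero (ha.trans_lt hr.1)]
      simp
    · rw [volume_annulus hR hx ha0, intervalIntegral.integral_of_le hab,
        ← integral_eq_lintegral_of_nonneg_ae, ← setIntegral_congr_set Ioo_ae_eq_Ico,
        setIntegral_congr_set Ioo_ae_eq_Ioc]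
      · refine setIntegral_congr_fun measurableSet_Ioc fun r hr => ?_
        have hr0 : 0 < r := ha0.trans hr.1
        rw [profile_eq hR hx (ha.trans_lt hr.1)]
        field_simp
      · filter_upwards [ae_restrict_mem measurableSet_Ico] with r hr
        have := Real.arccos_nonneg ((‖x‖ ^ 2 + r ^ 2 - R ^ 2) / (2 * ‖x‖ * r))
        have hr0 : 0 < r := ha0.trans_le hr.1
        simp only [Pi.zero_apply]
        positivity
      · refine Measurable.aestronglyMeasurable ?_
        have := Real.continuous_arccos.measurable
        fun_prop
  unfold oneN
  rw [hsplit, measure_union hdisj hm, ENNReal.toReal_add hfin1 hfin2, key]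
  field_simp
  ring

lemma volume_disc {R : ℝ} (hR : 0 < R) (x : Plane) :
    (volume (Metric.ball x R)).toReal = π * R ^ 2 := by
  rw [EuclideanSpace.volume_ball_fin_two]
  simp [ENNReal.toReal_ofReal hR.le, mul_comm, Real.pi_pos.le]

lemma oneN_of_le {R r : ℝ} (hR : 0 < R) (x : Plane) (h : ‖x‖ + R ≤ r) : oneN R x r = 1 := by
  have : Metric.ball (0 : Plane) r ∩ Metric.ball x R = Metric.ball x R := by
    refine inter_eq_right.2 (Metric.ball_subset_ball' ?_)
    rw [dist_zero_right]; linarith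
  unfold oneN
  rw [this, volume_disc hR]
  exact div_self (by positivity)

lemma oneN_of_ge {R r : ℝ} (x : Plane) (h : r + R ≤ ‖x‖) : oneN R x r = 0 := by
  have : Metric.ball (0 : Plane) r ∩ Metric.ball x R = ∅ := by
    refine (Metric.ball_disjoint_ball ?_).inter_eq
    rwa [dist_zero_left]
  unfold oneN
  rw [this]; simp

/-- If no profile is active at `r`, every disc is counted fully or not at all and the counting
function takes an integer value. -/
lemma exists_active {R r : ℝ} (hR : 0 < R) {m : ℕ} (y : Fin m → Plane)
    (h : ∀ k : ℤ, countN R y r ≠ k) : ∃ l, |r - ‖y l‖| < R := by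
  by_contra! hc
  have : ∀ l, ∃ k : ℤ, oneN R (y l) r = k := by
    intro l
    rcases le_abs.1 (hc l) with h1 | h1
    · exact ⟨1, by rw [oneN_of_le hR _ (by linarith)]; simp⟩
    · exact ⟨0, by rw [oneN_of_ge _ (by linarith)]; simp⟩
  choose k hk using this
  refine h (∑ l, k l) ?_
  rw [countN_eq_sum, Int.cast_sum]
  exact Finset.sum_congr rfl fun l _ => hk l

lemma oneN_mono {R a b : ℝ} (hR : 0 < R) (x : Plane) (hab : a ≤ b) :
    oneN R x a ≤ oneN R x b := by
  unfold oneN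
  have hfin : volume (Metric.ball (0 : Plane) b ∩ Metric.ball x R) ≠ ⊤ :=
    ((measure_mono inter_subset_right).trans_lt measure_ball_lt_top).ne
  gcongr

lemma countN_mono {R : ℝ} (hR : 0 < R) {m : ℕ} (y : Fin m → Plane) : Monotone (countN R y) :=
  fun _ _ hab => Finset.sum_le_sum fun l _ => oneN_mono hR (y l) hab

lemma countN_sub {R a b : ℝ} (hR : 0 < R) {m : ℕ} (y : Fin m → Plane) (ha : R ≤ a)
    (hab : a ≤ b) : countN R y b - countN R y a = ∫ r in a..b, countN' R y r := by
  unfold countN'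
  rw [intervalIntegral.integral_finsetSum
    fun l _ => profile_intervalIntegrable hR (norm_nonneg _) ha hab,
    countN_eq_sum, countN_eq_sum, ← Finset.sum_sub_distrib]
  exact Finset.sum_congr rfl fun l _ => oneN_sub hR _ ha hab

lemma countN'_intervalIntegrable {R a b : ℝ} (hR : 0 < R) {m : ℕ} (y : Fin m → Plane)
    (ha : R ≤ a) (hab : a ≤ b) : IntervalIntegrable (countN' R y) volume a b := by
  have : countN' R y = ∑ l, profile R ‖y l‖ := by
    ext r; simp [countN']
  rw [this]
  exact IntervalIntegrable.sum _ fun l _ => profile_intervalIntegrable hR (norm_nonneg _) ha hab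

/-! ### Growth of the counting function between integer values -/

lemma two_sub_le_arccos_sq {x : ℝ} (h1 : -1 ≤ x) (h2 : x ≤ 1) : 2 * (1 - x) ≤ Real.arccos x ^ 2 := by
  have := Real.one_sub_sq_div_two_le_cos (x := Real.arccos x)
  rw [Real.cos_arccos h1 h2] at this
  linarith

/-- Square-root lower bound for the profile at distance at least `τ` from the two ends of its
support `[d - R, d + R]`. -/
lemma profile_ge {R d r τ : ℝ} (hR : 0 < R) (hr : R < r) (hτ : 0 ≤ τ)
    (hτR : τ ≤ R / 2) (h1 : d - R + τ ≤ r) (h2 : r ≤ d + R - τ) :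
    Real.sqrt (3 * R) / (π * R ^ 2) * Real.sqrt τ ≤ profile R d r := by
  have hr0 : 0 < r := hR.trans hr
  have hd : 0 < d := by linarith
  rw [profile_eq hR hd hr]
  set x := (d ^ 2 + r ^ 2 - R ^ 2) / (2 * d * r) with hx
  have hxe : x * (2 * d * r) = d ^ 2 + r ^ 2 - R ^ 2 := by rw [hx]; field_simp
  have hdr : 0 < d * r := by positivity
  have hw : 2 * R * τ - τ ^ 2 ≤ R ^ 2 - (d - r) ^ 2 := by nlinarith
  have hw' : 3 / 2 * R * τ ≤ R ^ 2 - (d - r) ^ 2 := by nlinarith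
  have hx1 : -1 ≤ x := by
    rw [hx, le_div_iff₀ (by positivity)]
    nlinarith
  have hx2 : x ≤ 1 := by
    rw [hx, div_le_one (by positivity)]
    nlinarith [mul_nonneg hR.le hτ]
  have hθ := two_sub_le_arccos_sq hx1 hx2
  have hθ0 := Real.arccos_nonneg x
  set θ := Real.arccos x with hθd
  have hmain : Real.sqrt (3 * R * τ) ≤ 2 * r * θ := by
    refine Real.sqrt_le_iff.2 ⟨by positivity, ?_⟩
    -- `d ≤ 2 r`, because `d ≤ r + R` and `R < r`
    have hd2 : d ≤ 2 * r := by linarith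
    have e1 : R ^ 2 - (d - r) ^ 2 = (2 * (1 - x)) * (d * r) := by linarith
    have e2 : (2 * (1 - x)) * (d * r) ≤ θ ^ 2 * (d * r) := by gcongr
    have e3 : θ ^ 2 * (d * r) ≤ θ ^ 2 * (2 * r * r) := by gcongr
    nlinarith
  calc _ = Real.sqrt (3 * R * τ) / (π * R ^ 2) := by
        rw [Real.sqrt_mul (by positivity) τ]; ring
    _ ≤ 2 * r * θ / (π * R ^ 2) := by gcongr
    _ = _ := by ring

lemma integral_sqrt {u : ℝ} (hu : 0 ≤ u) : ∫ s in (0 : ℝ)..u, Real.sqrt s = 2 / 3 * (u * Real.sqrt u) := by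
  simp only [Real.sqrt_eq_rpow]
  rw [integral_rpow (Or.inl (by norm_num))]
  have : (0 : ℝ) ^ ((1 : ℝ) / 2 + 1) = 0 := Real.zero_rpow (by norm_num)
  rw [this, Real.rpow_add_one' hu (by norm_num)]
  ring

/-- The primitive of `s ↦ √(min s m)` is convex, hence lies above its tangent at `m`. -/
lemma integral_sqrt_min_ge {u m : ℝ} (hu : 0 ≤ u) (hm : 0 ≤ m) :
    (u - m / 3) * Real.sqrt m ≤ ∫ s in (0 : ℝ)..u, Real.sqrt (min s m) := by
  have hint : ∀ a b : ℝ, IntervalIntegrable (fun s => Real.sqrt (min s m)) volume a b :=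
    fun a b => Continuous.intervalIntegrable (by fun_prop) _ _
  rcases le_total u m with h | h
  · have : ∫ s in (0 : ℝ)..u, Real.sqrt (min s m) = ∫ s in (0 : ℝ)..u, Real.sqrt s := by
      refine intervalIntegral.integral_congr fun s hs => ?_
      rw [uIcc_of_le hu] at hs
      simp only [min_eq_left (hs.2.trans h)]
    rw [this, integral_sqrt hu]
    have ha := Real.sqrt_nonneg u
    have hb := Real.sqrt_nonneg m
    have ea := Real.sq_sqrt hu
    have eb := Real.sq_sqrt hm
    set A := Real.sqrt u
    set B := Real.sqrt m
    rw [← ea, ← eb]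
    nlinarith [mul_nonneg (sq_nonneg (A - B)) (by positivity : 0 ≤ 2 * A + B)]
  · rw [← intervalIntegral.integral_add_adjacent_intervals (hint 0 m) (hint m u)]
    have e1 : ∫ s in (0 : ℝ)..m, Real.sqrt (min s m) = ∫ s in (0 : ℝ)..m, Real.sqrt s := by
      refine intervalIntegral.integral_congr fun s hs => ?_
      rw [uIcc_of_le hm] at hs
      simp only [min_eq_left hs.2]
    have e2 : ∫ s in m..u, Real.sqrt (min s m) = ∫ s in m..u, Real.sqrt m := by
      refine intervalIntegral.integral_congr fun s hs => ?_
      rw [uIcc_of_le h] at hs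
      simp only [min_eq_right hs.1]
    rw [e1, e2, integral_sqrt hm, intervalIntegral.integral_const, smul_eq_mul]
    linarith

/-- Growth of the contribution of a disc whose support starts before `a` and does not end soon
after `b`. -/
lemma oneN_growth_left {R a b m : ℝ} (hR : 0 < R) (x : Plane) (ha : R ≤ a) (hab : a ≤ b)
    (hm : 0 ≤ m) (hmR : m ≤ R / 2) (h1 : ‖x‖ - R ≤ a) (h2 : b ≤ ‖x‖ + R - m) :
    Real.sqrt (3 * R) / (π * R ^ 2) * ((b - a - m / 3) * Real.sqrt m)
      ≤ oneN R x b - oneN R x a := by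
  rw [oneN_sub hR x ha hab]
  have hsub : ∫ r in a..b, Real.sqrt (min (r - a) m) = ∫ s in (0 : ℝ)..(b - a), Real.sqrt (min s m) := by
    rw [intervalIntegral.integral_comp_sub_right (fun s => Real.sqrt (min s m)), sub_self]
  calc _ ≤ Real.sqrt (3 * R) / (π * R ^ 2) * ∫ s in (0 : ℝ)..(b - a), Real.sqrt (min s m) := by
        gcongr
        exact integral_sqrt_min_ge (by linarith) hm
    _ = ∫ r in a..b, Real.sqrt (3 * R) / (π * R ^ 2) * Real.sqrt (min (r - a) m) := by
        rw [intervalIntegral.integral_const_mul, hsub]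
    _ ≤ _ := by
        refine intervalIntegral.integral_mono_on_of_le_Ioo hab
          (Continuous.intervalIntegrable (by fun_prop) _ _)
          (profile_intervalIntegrable hR (norm_nonneg _) ha hab) fun r hr => ?_
        have hl : min (r - a) m ≤ r - a := min_le_left _ _
        have hl' : min (r - a) m ≤ m := min_le_right _ _
        exact profile_ge hR (ha.trans_lt hr.1)
          (le_min (by linarith [hr.1]) hm) (by linarith) (by linarith) (by linarith [hr.2])

/-- Growth of the contribution of a disc whose support ends after `b` and does not start shortly
before `a`. -/
lemma oneN_growth_right {R a b m : ℝ} (hR : 0 < R) (x : Plane) (ha : R ≤ a) (hab : a ≤ b)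
    (hm : 0 ≤ m) (hmR : m ≤ R / 2) (h1 : ‖x‖ - R + m ≤ a) (h2 : b ≤ ‖x‖ + R) :
    Real.sqrt (3 * R) / (π * R ^ 2) * ((b - a - m / 3) * Real.sqrt m)
      ≤ oneN R x b - oneN R x a := by
  rw [oneN_sub hR x ha hab]
  have hsub : ∫ r in a..b, Real.sqrt (min (b - r) m) = ∫ s in (0 : ℝ)..(b - a), Real.sqrt (min s m) := by
    rw [intervalIntegral.integral_comp_sub_left (fun s => Real.sqrt (min s m)), sub_self]
  calc _ ≤ Real.sqrt (3 * R) / (π * R ^ 2) * ∫ s in (0 : ℝ)..(b - a), Real.sqrt (min s m) := by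
        gcongr
        exact integral_sqrt_min_ge (by linarith) hm
    _ = ∫ r in a..b, Real.sqrt (3 * R) / (π * R ^ 2) * Real.sqrt (min (b - r) m) := by
        rw [intervalIntegral.integral_const_mul, hsub]
    _ ≤ _ := by
        refine intervalIntegral.integral_mono_on_of_le_Ioo hab
          (Continuous.intervalIntegrable (by fun_prop) _ _)
          (profile_intervalIntegrable hR (norm_nonneg _) ha hab) fun r hr => ?_
        have hl : min (b - r) m ≤ b - r := min_le_left _ _
        have hl' : min (b - r) m ≤ m := min_le_right _ _
        exact profile_ge hR (ha.trans_lt hr.1)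
          (le_min (by linarith [hr.2]) hm) (by linarith) (by linarith [hr.1]) (by linarith)

/-- If no value of the counting function on `(a, b)` is an integer, then every `r ∈ (a, b)` is
interior to the support of some profile.  Since the supports have length `2R`, at most two of them
carry the growth: either one support contains `[a, b]`, or one ends at some `p ∈ (a, b)` and
another starts before `p`. -/
lemma countN_growth {R a b : ℝ} (hR : 0 < R) {m : ℕ} (y : Fin m → Plane) (ha : R ≤ a)
    (hab : a < b) (hbR : b - a ≤ R) (hn : ∀ r ∈ Ioo a b, ∀ k : ℤ, countN R y r ≠ k) :
    Real.sqrt (3 * R) / (π * R ^ 2) * (4 / 3 * ((b - a) / 2 * Real.sqrt ((b - a) / 2)))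
      ≤ countN R y b - countN R y a := by
  have hact : ∀ r ∈ Ioo a b, ∃ l, ‖y l‖ - R < r ∧ r < ‖y l‖ + R := by
    intro r hr
    obtain ⟨l, hl⟩ := exists_active hR y (hn r hr)
    rw [abs_lt] at hl
    exact ⟨l, by linarith [hl.2], by linarith [hl.1]⟩
  set h := (b - a) / 2 with hh
  have hh0 : 0 ≤ h := by linarith
  have hhR : h ≤ R / 2 := by linarith
  have hsum : countN R y b - countN R y a = ∑ l, (oneN R (y l) b - oneN R (y l) a) := by
    rw [countN_eq_sum, countN_eq_sum, Finset.sum_sub_distrib]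
  have hinc : ∀ l, 0 ≤ oneN R (y l) b - oneN R (y l) a := fun l =>
    sub_nonneg.2 (oneN_mono hR _ hab.le)
  rw [hsum]
  by_cases hone : ∃ l, ‖y l‖ - R ≤ a ∧ b ≤ ‖y l‖ + R
  · obtain ⟨l, h1, h2⟩ := hone
    refine le_trans ?_ (Finset.single_le_sum (fun i _ => hinc i) (Finset.mem_univ l))
    have g1 := oneN_growth_left hR (y l) ha (show a ≤ a + h by linarith) hh0 hhR h1 (by linarith)
    have g2 := oneN_growth_right hR (y l) (show R ≤ a + h by linarith)
      (show a + h ≤ b by linarith) hh0 hhR (by linarith) h2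
    have eb : b = a + h + h := by linarith
    have e1 : a + h - a - h / 3 = 2 / 3 * h := by ring
    have e2 : b - (a + h) - h / 3 = 2 / 3 * h := by rw [eb]; ring
    rw [e1] at g1
    rw [e2] at g2
    linarith
  · push Not at hone
    -- some support ends inside `(a, b)`: otherwise no support would cover the first left end point
    have hE : (Finset.univ.filter fun l => ‖y l‖ + R ∈ Ioo a b).Nonempty := by
      by_contra hE
      rw [Finset.not_nonempty_iff_eq_empty, Finset.filter_eq_empty_iff] at hE
      have hstart : ∀ r ∈ Ioo a b, ∃ l, ‖y l‖ - R ∈ Ioo a b ∧ ‖y l‖ - R < r := by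
        intro r hr
        obtain ⟨l, h1, h2⟩ := hact r hr
        refine ⟨l, ⟨?_, by linarith [hr.2]⟩, h1⟩
        by_contra hle
        have := hone l (by linarith)
        exact hE (Finset.mem_univ l) ⟨by linarith [hr.1], this⟩
      have hS : (Finset.univ.filter fun l => ‖y l‖ - R ∈ Ioo a b).Nonempty := by
        obtain ⟨l, h1, _⟩ := hstart ((a + b) / 2) ⟨by linarith, by linarith⟩
        exact ⟨l, by simpa using h1⟩
      obtain ⟨l, hl, hmin⟩ := Finset.exists_min_image _ (fun l => ‖y l‖ - R) hS
      obtain ⟨l', h1, h2⟩ := hstart _ (Finset.mem_filter.1 hl).2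
      exact absurd (hmin l' (by simpa using h1)) (not_le.2 h2)
    obtain ⟨l₁, hl₁, hmax⟩ := Finset.exists_max_image _ (fun l => ‖y l‖ + R) hE
    have hp := (Finset.mem_filter.1 hl₁).2
    set p := ‖y l₁‖ + R with hpdef
    obtain ⟨l₂, h1, h2⟩ := hact p hp
    have hb2 : b ≤ ‖y l₂‖ + R := by
      by_contra hlt
      have := hmax l₂ (Finset.mem_filter.2 ⟨Finset.mem_univ _, by linarith [hp.1], by linarith⟩)
      linarith
    have hne : l₁ ≠ l₂ := by
      rintro rfl
      linarith
    have ha2 : a < ‖y l₂‖ - R := by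
      by_contra hle
      linarith [hone l₂ (by linarith)]
    have g1 := oneN_growth_right hR (y l₁) ha hp.1.le hh0 hhR (by linarith [hp.2])
      (le_of_eq hpdef)
    have g2 := oneN_growth_left hR (y l₂) (ha.trans hp.1.le) hp.2.le hh0 hhR h1.le (by linarith)
    have m1 := oneN_mono hR (y l₁) hp.2.le
    have m2 := oneN_mono hR (y l₂) hp.1.le
    have hpair : (oneN R (y l₁) b - oneN R (y l₁) a) + (oneN R (y l₂) b - oneN R (y l₂) a) ≤
        ∑ l, (oneN R (y l) b - oneN R (y l) a) := by
      rw [← Finset.sum_pair (f := fun l => oneN R (y l) b - oneN R (y l) a) hne]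
      exact Finset.sum_le_sum_of_subset_of_nonneg (Finset.subset_univ _) fun i _ _ => hinc i
    have e : Real.sqrt (3 * R) / (π * R ^ 2) * (4 / 3 * (h * Real.sqrt h)) =
        Real.sqrt (3 * R) / (π * R ^ 2) * ((p - a - h / 3) * Real.sqrt h) +
        Real.sqrt (3 * R) / (π * R ^ 2) * ((b - p - h / 3) * Real.sqrt h) := by
      have : b = a + 2 * h := by linarith
      rw [this]; ring
    rw [e]
    linarith

/-- The squared form of `countN_growth`. -/
lemma countN_growth_sq {R a b : ℝ} (hR : 0 < R) {m : ℕ} (y : Fin m → Plane) (ha : R ≤ a)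
    (hab : a < b) (hbR : b - a ≤ R) (hn : ∀ r ∈ Ioo a b, ∀ k : ℤ, countN R y r ≠ k) :
    2 / (3 * π ^ 2 * R ^ 3) * (b - a) ^ 3 ≤ (countN R y b - countN R y a) ^ 2 := by
  have hg := countN_growth hR y ha hab hbR hn
  have h0 : 0 ≤ Real.sqrt (3 * R) / (π * R ^ 2) *
      (4 / 3 * ((b - a) / 2 * Real.sqrt ((b - a) / 2))) := by
    have : 0 ≤ b - a := by linarith
    positivity
  refine le_trans (le_of_eq ?_) (pow_le_pow_left₀ h0 hg 2)
  simp only [mul_pow, div_pow]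
  rw [Real.sq_sqrt (by positivity), Real.sq_sqrt (by linarith)]
  field_simp
  ring

/-! ### Weighted means of the quadratic deviation -/

/-- On `[j, j + L]` with `L ≤ j` the weight `1 / r` varies by a factor of at most two. -/
lemma weighted_ge {D : ℝ → ℝ} {j L K : ℝ} (hj : 0 < j) (hL : 0 ≤ L) (hLj : L ≤ j) (hK : 0 ≤ K)
    (hD : IntervalIntegrable D volume j (j + L)) (hD0 : ∀ r ∈ Icc j (j + L), 0 ≤ D r)
    (h : 2 * K * L ≤ ∫ r in j..(j + L), D r) :
    K * ∫ r in j..(j + L), r⁻¹ ≤ ∫ r in j..(j + L), D r * r⁻¹ := by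
  have hle : j ≤ j + L := by linarith
  have hinv : ContinuousOn (fun r : ℝ => r⁻¹) (uIcc j (j + L)) := by
    rw [uIcc_of_le hle]
    exact continuousOn_inv₀.mono fun r hr => (hj.trans_le hr.1).ne'
  have h1 : ∫ r in j..(j + L), r⁻¹ ≤ ∫ r in j..(j + L), j⁻¹ :=
    intervalIntegral.integral_mono_on hle hinv.intervalIntegrable intervalIntegrable_const
      fun r hr => inv_anti₀ hj hr.1
  have h2 : ∫ r in j..(j + L), D r * (2 * j)⁻¹ ≤ ∫ r in j..(j + L), D r * r⁻¹ :=
    intervalIntegral.integral_mono_on hle (hD.mul_const _) (hD.mul_continuousOn hinv)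
      fun r hr => mul_le_mul_of_nonneg_left
        (inv_anti₀ (hj.trans_le hr.1) (by linarith [hr.2])) (hD0 r hr)
  rw [intervalIntegral.integral_const, smul_eq_mul] at h1
  rw [intervalIntegral.integral_mul_const] at h2
  calc _ ≤ K * ((j + L - j) * j⁻¹) := by gcongr
    _ = 2 * K * L * (2 * j)⁻¹ := by field_simp; ring
    _ ≤ _ := (mul_le_mul_of_nonneg_right h (by positivity)).trans h2

lemma integral_sq_ge {j L x : ℝ} (hL : 0 ≤ L) :
    L ^ 3 / 12 ≤ ∫ r in j..(j + L), (r - x) ^ 2 := by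
  rw [intervalIntegral.integral_comp_sub_right (fun s => s ^ 2), integral_pow]
  have : 0 ≤ L * (L + 2 * (j - x)) ^ 2 := by positivity
  push_cast
  nlinarith

lemma integral_cube_ge {j L x : ℝ} (h1 : j ≤ x) (h2 : x ≤ j + L) :
    L ^ 4 / 32 ≤ ∫ r in j..(j + L), |r - x| ^ 3 := by
  have hc : ∀ a b : ℝ, IntervalIntegrable (fun r => |r - x| ^ 3) volume a b :=
    fun a b => Continuous.intervalIntegrable (by fun_prop) _ _
  rw [← intervalIntegral.integral_add_adjacent_intervals (hc j x) (hc x (j + L))]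
  have e1 : ∫ r in j..x, |r - x| ^ 3 = ∫ r in j..x, (x - r) ^ 3 := by
    refine intervalIntegral.integral_congr fun r hr => ?_
    rw [uIcc_of_le h1] at hr
    simp only [abs_of_nonpos (sub_nonpos.2 hr.2), neg_sub]
  have e2 : ∫ r in x..(j + L), |r - x| ^ 3 = ∫ r in x..(j + L), (r - x) ^ 3 := by
    refine intervalIntegral.integral_congr fun r hr => ?_
    rw [uIcc_of_le h2] at hr
    simp only [abs_of_nonneg (sub_nonneg.2 hr.1)]
  rw [e1, e2, intervalIntegral.integral_comp_sub_right (fun s => s ^ 3),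
    intervalIntegral.integral_comp_sub_left (fun s => s ^ 3), integral_pow, integral_pow]
  obtain ⟨u, hu⟩ : ∃ u, u = x - j := ⟨_, rfl⟩
  obtain ⟨v, hv⟩ : ∃ v, v = j + L - x := ⟨_, rfl⟩
  have hL : L = u + v := by rw [hu, hv]; ring
  rw [← hu, ← hv, hL]
  push_cast
  -- convexity of the fourth power, in the form `8 (u⁴ + v⁴) ≥ (u + v)⁴`
  have k1 : ((u + v) ^ 2) ^ 2 ≤ (2 * (u ^ 2 + v ^ 2)) ^ 2 := by
    gcongr
    nlinarith [sq_nonneg (u - v)]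
  nlinarith [sq_nonneg (u ^ 2 - v ^ 2)]

lemma countN_nonneg (R : ℝ) {m : ℕ} (y : Fin m → Plane) (r : ℝ) :
    0 ≤ countN R y r :=
  Finset.sum_nonneg fun _ _ => by positivity

lemma sq_dev_intervalIntegrable {R : ℝ} (hR : 0 < R) {m : ℕ} (y : Fin m → Plane) (c a b : ℝ) :
    IntervalIntegrable (fun r => (countN R y r - c) ^ 2) volume a b := by
  have h1 : Monotone fun r => countN R y r ^ 2 := fun s t hst =>
    pow_le_pow_left₀ (countN_nonneg R y s) (countN_mono hR y hst) 2
  have h2 : (fun r => (countN R y r - c) ^ 2) =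
      fun r => countN R y r ^ 2 - 2 * c * countN R y r + c ^ 2 := by
    ext r; ring
  rw [h2]
  exact (h1.intervalIntegrable.sub ((countN_mono hR y).intervalIntegrable.const_mul _)).add
    intervalIntegrable_const

/-- On a long interval: lower bound for the quadratic deviation of the counting function from its value
at `x`, in the case `C * R ≤ zp - zm`. -/
lemma deviation_long {R : ℝ} (hR : 0 < R) {m : ℕ} (y : Fin m → Plane) {zm zp x C : ℝ}
    (hzm : R ≤ zm) (hn : ∀ r ∈ Ioo zm zp, ∀ k : ℤ, countN R y r ≠ k) (hx : x ∈ Ioo zm zp)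
    (hC : 0 < C) (hC1 : C ≤ 1) (hlong : C * R ≤ zp - zm) :
    C ^ 4 / (96 * π ^ 2) * ∫ r in zm..zp, r⁻¹ ≤
      ∫ r in zm..zp, (countN R y r - countN R y x) ^ 2 * r⁻¹ := by
  set D : ℝ → ℝ := fun r => (countN R y r - countN R y x) ^ 2 with hD
  set K : ℝ := C ^ 4 / (96 * π ^ 2) with hK
  have hz : zm < zp := hx.1.trans hx.2
  have hzm0 : 0 < zm := hR.trans_le hzm
  have hK1 : K ≤ 1 / (12 * π ^ 2) := by
    have : C ^ 4 ≤ 1 := pow_le_one₀ hC.le hC1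
    rw [hK, div_le_div_iff₀ (by positivity) (by positivity)]
    nlinarith [sq_pos_of_pos Real.pi_pos]
  -- pointwise bound near `x`
  have hnear : ∀ r ∈ Ioo zm zp, |r - x| ≤ R →
      2 / (3 * π ^ 2 * R ^ 3) * |r - x| ^ 3 ≤ D r := by
    intro r hr hrx
    rcases lt_trichotomy r x with h | h | h
    · rw [abs_of_neg (by linarith), neg_sub] at hrx ⊢
      have := countN_growth_sq hR y (hzm.trans hr.1.le) h hrx fun s hs =>
        hn s ⟨hr.1.trans hs.1, hs.2.trans hx.2⟩
      simp only [hD]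
      rw [← neg_sq (countN R y r - countN R y x), neg_sub]
      exact this
    · simp [h, hD]
    · rw [abs_of_pos (by linarith)] at hrx ⊢
      exact countN_growth_sq hR y (hzm.trans hx.1.le) h hrx fun s hs =>
        hn s ⟨hx.1.trans hs.1, hs.2.trans hr.2⟩
  have hhalf : ∀ t ∈ Ioo zm zp, |t - x| = R / 2 → K ≤ D t := by
    intro t ht htx
    refine hK1.trans (le_trans (le_of_eq ?_) (hnear t ht (by linarith)))
    rw [htx]
    field_simp
    ring
  -- pointwise bound away from `x`, by monotonicity of the counting function
  have hleft : ∀ r ∈ Ioo zm zp, r ≤ x - R / 2 → K ≤ D r := by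
    intro r hr hrx
    have h1 := hhalf (x - R / 2) ⟨by linarith [hr.1], by linarith [hx.2]⟩ (by
      rw [abs_of_neg (by linarith)]; ring)
    refine h1.trans ?_
    have m1 := countN_mono hR y hrx
    have m2 := countN_mono hR y (show x - R / 2 ≤ x by linarith)
    simp only [hD]
    nlinarith
  have hright : ∀ r ∈ Ioo zm zp, x + R / 2 ≤ r → K ≤ D r := by
    intro r hr hrx
    have h1 := hhalf (x + R / 2) ⟨by linarith [hx.1], by linarith [hr.2]⟩ (by
      rw [abs_of_pos (by linarith)]; ring)
    refine h1.trans ?_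
    have m1 := countN_mono hR y hrx
    have m2 := countN_mono hR y (show x ≤ x + R / 2 by linarith)
    simp only [hD]
    nlinarith
  -- a window of length `min (zp - zm) R` around `x`
  obtain ⟨j, L, hCL, hLR, hj, hjL, hjx, hxj, hout1, hout2⟩ : ∃ j L : ℝ, C * R ≤ L ∧ L ≤ R ∧
      zm ≤ j ∧ j + L ≤ zp ∧ j ≤ x ∧ x ≤ j + L ∧
      (∀ r ∈ Ioo zm j, r ≤ x - R / 2) ∧ (∀ r ∈ Ioo (j + L) zp, x + R / 2 ≤ r) := by
    rcases le_total (zp - zm) R with h | h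
    · refine ⟨zm, zp - zm, hlong, h, le_rfl, by linarith, hx.1.le, by linarith [hx.2], ?_, ?_⟩
      · intro r hr; linarith [hr.1, hr.2]
      · intro r hr; linarith [hr.1, hr.2]
    · have hCR : C * R ≤ R := by nlinarith
      rcases le_total (x - R / 2) zm with h1 | h1
      · refine ⟨zm, R, hCR, le_rfl, le_rfl, by linarith, hx.1.le, by linarith, ?_, ?_⟩
        · intro r hr; linarith [hr.1, hr.2]
        · intro r hr; linarith [hr.1, hr.2]
      rcases le_total zp (x + R / 2) with h2 | h2
      · refine ⟨zp - R, R, hCR, le_rfl, by linarith, by linarith, by linarith,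
          by linarith [hx.2], ?_, ?_⟩
        · intro r hr; linarith [hr.1, hr.2]
        · intro r hr; linarith [hr.1, hr.2]
      · refine ⟨x - R / 2, R, hCR, le_rfl, by linarith, by linarith, by linarith,
          by linarith, ?_, ?_⟩
        · intro r hr; exact hr.2.le
        · intro r hr; linarith [hr.1]
  have hL0 : 0 ≤ L := le_trans (by positivity) hCL
  have hj0 : 0 < j := hzm0.trans_le hj
  have hDint : ∀ a b, IntervalIntegrable D volume a b := sq_dev_intervalIntegrable hR y _
  have hinv : ∀ a b, zm ≤ a → a ≤ b → ContinuousOn (fun r : ℝ => r⁻¹) (uIcc a b) := by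
    intro a b ha hab
    rw [uIcc_of_le hab]
    exact continuousOn_inv₀.mono fun r hr => (hzm0.trans_le (ha.trans hr.1)).ne'
  have hmid : K * ∫ r in j..(j + L), r⁻¹ ≤ ∫ r in j..(j + L), D r * r⁻¹ := by
    refine weighted_ge hj0 hL0 (hLR.trans (hzm.trans hj)) (by positivity) (hDint _ _)
      (fun r _ => sq_nonneg _) ?_
    have h1 : ∫ r in j..(j + L), 2 / (3 * π ^ 2 * R ^ 3) * |r - x| ^ 3 ≤ ∫ r in j..(j + L), D r := by
      refine intervalIntegral.integral_mono_on_of_le_Ioo (by linarith)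
        (Continuous.intervalIntegrable (by fun_prop) _ _) (hDint _ _) fun r hr => ?_
      refine hnear r ⟨hj.trans_lt hr.1, hr.2.trans_le hjL⟩ (abs_le.2 ⟨?_, ?_⟩)
      · linarith [hr.1]
      · linarith [hr.2]
    rw [intervalIntegral.integral_const_mul] at h1
    refine le_trans ?_ (le_trans (mul_le_mul_of_nonneg_left (integral_cube_ge hjx hxj)
      (by positivity)) h1)
    have hC4 : C ^ 4 * R ^ 3 ≤ L ^ 3 := by
      calc C ^ 4 * R ^ 3 = C * (C * R) ^ 3 := by ring
        _ ≤ 1 * (C * R) ^ 3 := by gcongr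
        _ ≤ L ^ 3 := by rw [one_mul]; gcongr
    have e1 : 2 * K * L = L / (48 * π ^ 2 * R ^ 3) * (C ^ 4 * R ^ 3) := by
      rw [hK]; field_simp; ring
    have e2 : 2 / (3 * π ^ 2 * R ^ 3) * (L ^ 4 / 32) = L / (48 * π ^ 2 * R ^ 3) * L ^ 3 := by
      field_simp; ring
    rw [e1, e2]
    gcongr
  have hside : ∀ a b, zm ≤ a → a ≤ b → (∀ r ∈ Ioo a b, K ≤ D r) →
      K * ∫ r in a..b, r⁻¹ ≤ ∫ r in a..b, D r * r⁻¹ := by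
    intro a b ha hab h
    rw [← intervalIntegral.integral_const_mul]
    refine intervalIntegral.integral_mono_on_of_le_Ioo hab
      ((hinv a b ha hab).intervalIntegrable.const_mul _)
      ((hDint a b).mul_continuousOn (hinv a b ha hab)) fun r hr => ?_
    have : 0 < r := hzm0.trans_le (ha.trans hr.1.le)
    have := h r hr
    gcongr
  have hs1 := hside zm j le_rfl hj fun r hr =>
    hleft r ⟨hr.1, by linarith [hr.2]⟩ (hout1 r hr)
  have hs2 := hside (j + L) zp (by linarith) hjL fun r hr =>
    hright r ⟨by linarith [hr.1], hr.2⟩ (hout2 r hr)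
  have hi : ∀ a b, zm ≤ a → a ≤ b → IntervalIntegrable (fun r : ℝ => r⁻¹) volume a b :=
    fun a b ha hab => (hinv a b ha hab).intervalIntegrable
  have hi' : ∀ a b, zm ≤ a → a ≤ b → IntervalIntegrable (fun r : ℝ => D r * r⁻¹) volume a b :=
    fun a b ha hab => (hDint a b).mul_continuousOn (hinv a b ha hab)
  rw [← intervalIntegral.integral_add_adjacent_intervals (hi zm j le_rfl hj)
      (hi j zp hj (by linarith)),
    ← intervalIntegral.integral_add_adjacent_intervals (hi j (j + L) hj (by linarith))
      (hi (j + L) zp (by linarith) hjL),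
    ← intervalIntegral.integral_add_adjacent_intervals (hi' zm j le_rfl hj)
      (hi' j zp hj (by linarith)),
    ← intervalIntegral.integral_add_adjacent_intervals (hi' j (j + L) hj (by linarith))
      (hi' (j + L) zp (by linarith) hjL)]
  linarith

/-- On a short interval: lower bound for the quadratic deviation of the counting function from its value
at `x`, in the case where its derivative has comparable infimum and supremum. -/
lemma deviation_short {R : ℝ} (hR : 0 < R) {m : ℕ} (y : Fin m → Plane) {zm zp x C : ℝ}
    (hzm : R ≤ zm) (hx : x ∈ Ioo zm zp) (hgap : 1 ≤ countN R y zp - countN R y zm)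
    (hshort : zp - zm ≤ R)
    (hcomp : C ^ 2 / π * sSup (countN' R y '' Ioo zm zp) ≤ sInf (countN' R y '' Ioo zm zp)) :
    C ^ 4 / (96 * π ^ 2) * ∫ r in zm..zp, r⁻¹ ≤
      ∫ r in zm..zp, (countN R y r - countN R y x) ^ 2 * r⁻¹ := by
  have hz : zm < zp := hx.1.trans hx.2
  have hzm0 : 0 < zm := hR.trans_le hzm
  have hbelow : BddBelow (countN' R y '' Ioo zm zp) := by
    refine ⟨0, ?_⟩
    rintro _ ⟨r, hr, rfl⟩
    exact Finset.sum_nonneg fun l _ => profile_nonneg hR (norm_nonneg _) (hzm.trans_lt hr.1)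
  have habove : BddAbove (countN' R y '' Ioo zm zp) := by
    refine ⟨∑ _l : Fin m, 2 * zp / R ^ 2, ?_⟩
    rintro _ ⟨r, hr, rfl⟩
    refine Finset.sum_le_sum fun l _ => ?_
    refine (profile_le hR (norm_nonneg _) (hzm.trans_lt hr.1)).trans ?_
    have := hr.2.le
    gcongr
  set i := sInf (countN' R y '' Ioo zm zp) with hi
  set S := sSup (countN' R y '' Ioo zm zp) with hS
  have hSL : 1 ≤ S * (zp - zm) := by
    refine hgap.trans ?_
    rw [countN_sub hR y hzm hz.le]
    calc _ ≤ ∫ _r in zm..zp, S :=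
          intervalIntegral.integral_mono_on_of_le_Ioo hz.le
            (countN'_intervalIntegrable hR y hzm hz.le) intervalIntegrable_const
            fun r hr => le_csSup habove ⟨r, hr, rfl⟩
      _ = _ := by rw [intervalIntegral.integral_const, smul_eq_mul, mul_comm]
  have hiL : C ^ 2 / π ≤ i * (zp - zm) := by
    have h1 : C ^ 2 / π * 1 ≤ C ^ 2 / π * (S * (zp - zm)) :=
      mul_le_mul_of_nonneg_left hSL (by positivity)
    have h2 := mul_le_mul_of_nonneg_right hcomp (show 0 ≤ zp - zm by linarith)
    linarith
  have hgrow : ∀ a b, zm ≤ a → a ≤ b → b ≤ zp → i * (b - a) ≤ countN R y b - countN R y a := by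
    intro a b ha hab hb
    rw [countN_sub hR y (hzm.trans ha) hab]
    calc i * (b - a) = ∫ _r in a..b, i := by
          rw [intervalIntegral.integral_const, smul_eq_mul, mul_comm]
      _ ≤ _ := intervalIntegral.integral_mono_on_of_le_Ioo hab intervalIntegrable_const
            (countN'_intervalIntegrable hR y (hzm.trans ha) hab)
            fun r hr => csInf_le hbelow ⟨r, ⟨ha.trans_lt hr.1, hr.2.trans_le hb⟩, rfl⟩
  have hi0 : 0 ≤ i := by
    refine le_csInf ⟨_, x, hx, rfl⟩ ?_
    rintro _ ⟨r, hr, rfl⟩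
    exact Finset.sum_nonneg fun l _ => profile_nonneg hR (norm_nonneg _) (hzm.trans_lt hr.1)
  have key := weighted_ge (D := fun r => (countN R y r - countN R y x) ^ 2) (j := zm)
    (L := zp - zm) (K := C ^ 4 / (96 * π ^ 2)) hzm0 (by linarith) (hshort.trans hzm)
    (by positivity) (sq_dev_intervalIntegrable hR y _ _ _) (fun r _ => sq_nonneg _) ?_
  · rwa [add_sub_cancel] at key
  have h1 : ∫ r in zm..(zm + (zp - zm)), i ^ 2 * (r - x) ^ 2 ≤
      ∫ r in zm..(zm + (zp - zm)), (countN R y r - countN R y x) ^ 2 := by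
    refine intervalIntegral.integral_mono_on (by linarith)
      (Continuous.intervalIntegrable (by fun_prop) _ _)
      (sq_dev_intervalIntegrable hR y _ _ _) fun r hr => ?_
    rw [add_sub_cancel] at hr
    rw [← mul_pow]
    rw [sq_le_sq, abs_mul, abs_of_nonneg hi0]
    rcases le_total r x with h | h
    · have := hgrow r x hr.1 h hx.2.le
      rw [abs_sub_comm r x, abs_sub_comm (countN R y r), abs_of_nonneg (sub_nonneg.2 h)]
      exact this.trans (le_abs_self _)
    · have := hgrow x r hx.1.le h hr.2
      rw [abs_of_nonneg (sub_nonneg.2 h)]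
      exact this.trans (le_abs_self _)
  rw [intervalIntegral.integral_const_mul] at h1
  refine le_trans ?_ (le_trans (mul_le_mul_of_nonneg_left
    (integral_sq_ge (show 0 ≤ zp - zm by linarith)) (sq_nonneg i)) h1)
  have h2 : (C ^ 2 / π) ^ 2 ≤ (i * (zp - zm)) ^ 2 := pow_le_pow_left₀ (by positivity) hiL 2
  have e1 : 2 * (C ^ 4 / (96 * π ^ 2)) * (zp - zm) = (C ^ 2 / π) ^ 2 * ((zp - zm) / 48) := by
    field_simp; ring
  have e2 : i ^ 2 * ((zp - zm) ^ 3 / 12) = (i * (zp - zm)) ^ 2 * ((zp - zm) / 12) := by ring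
  rw [e1, e2]
  have : 0 ≤ zp - zm := by linarith
  gcongr
  norm_num

/-- **Good intervals** (Lemma 4.9).  Let `I = (z⁻, z⁺)` with `z⁻ ≥ R` be an interval with
`𝒩(z⁻), 𝒩(z⁺) ∈ ℤ`, `𝒩 ∉ ℤ` on `I`, on which `ρ(r) = |Φ̂(r) - 2q|²` for a fixed `q ∈ ℤ`
and `ρ(r_q) = 0` for some `r_q ∈ I`.  If, for some `0 < C ≤ 1`, either `|I| ≥ CR` or
`inf_I 𝒩' ≥ (C²/π) sup_I 𝒩'`, then the weighted mean
`ρ̄_I = (∫_I ρ/r)/(∫_I 1/r)` satisfies `ρ̄_I ≥ α² C⁴ / (24π²)`. -/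
theorem good_intervals
    (R α : ℝ) (hR : 0 < R) (hα : α ≠ 0) (m : ℕ) (y : Fin m → Plane)
    (zm zp : ℝ) (hzm : R ≤ zm) (hzz : zm < zp)
    (hintm : ∃ k : ℤ, countN R y zm = k)
    (hintp : ∃ k : ℤ, countN R y zp = k)
    (hnint : ∀ r ∈ Set.Ioo zm zp, ∀ k : ℤ, countN R y r ≠ k)
    (q : ℤ)
    (hq : ∀ r ∈ Set.Ioo zm zp,
      rhoFun α R y r = (α * (1 + 2 * countN R y r) - 2 * q) ^ 2)
    (rq : ℝ) (hrq : rq ∈ Set.Ioo zm zp) (hzero : rhoFun α R y rq = 0)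
    (C : ℝ) (hC : 0 < C) (hC1 : C ≤ 1)
    (hgood : C * R ≤ zp - zm ∨
      C ^ 2 / π * sSup (countN' R y '' Set.Ioo zm zp)
        ≤ sInf (countN' R y '' Set.Ioo zm zp)) :
    α ^ 2 * C ^ 4 / (24 * π ^ 2)
      ≤ (∫ r in zm..zp, rhoFun α R y r / r) / (∫ r in zm..zp, r⁻¹) := by
  have hzm0 : 0 < zm := hR.trans_le hzm
  have hsq : (α * (1 + 2 * countN R y rq) - 2 * q) ^ 2 = 0 := by rw [← hq rq hrq, hzero]
  have hlin : α * (1 + 2 * countN R y rq) - 2 * q = 0 := pow_eq_zero_iff two_ne_zero |>.1 hsq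
  have hrho : ∀ r ∈ Ioo zm zp,
      rhoFun α R y r / r = 4 * α ^ 2 * ((countN R y r - countN R y rq) ^ 2 * r⁻¹) := by
    intro r hr
    have : α * (1 + 2 * countN R y r) - 2 * q = 2 * α * (countN R y r - countN R y rq) := by
      linear_combination hlin
    rw [hq r hr, this]
    ring
  have hint : ∫ r in zm..zp, rhoFun α R y r / r =
      4 * α ^ 2 * ∫ r in zm..zp, (countN R y r - countN R y rq) ^ 2 * r⁻¹ := by
    rw [← intervalIntegral.integral_const_mul]
    exact intervalIntegral.integral_congr_Ioo_of_le hzz.le hrho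
  have hpos : 0 < ∫ r in zm..zp, r⁻¹ := by
    rw [integral_inv_of_pos hzm0 (hzm0.trans hzz)]
    exact Real.log_pos ((one_lt_div hzm0).2 hzz)
  have hgap : 1 ≤ countN R y zp - countN R y zm := by
    obtain ⟨k₁, h₁⟩ := hintm
    obtain ⟨k₂, h₂⟩ := hintp
    have hle := countN_mono hR y hzz.le
    have hlt : k₁ < k₂ := by
      by_contra hge
      have hge' : (k₂ : ℝ) ≤ k₁ := by exact_mod_cast not_lt.1 hge
      have m1 := countN_mono hR y hrq.1.le
      have m2 := countN_mono hR y hrq.2.le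
      exact hnint rq hrq k₁ (by linarith)
    have : (k₁ : ℝ) + 1 ≤ k₂ := by exact_mod_cast hlt
    linarith
  have hdev : C ^ 4 / (96 * π ^ 2) * ∫ r in zm..zp, r⁻¹ ≤
      ∫ r in zm..zp, (countN R y r - countN R y rq) ^ 2 * r⁻¹ := by
    by_cases hlong : C * R ≤ zp - zm
    · exact deviation_long hR y hzm hnint hrq hC hC1 hlong
    · refine deviation_short hR y hzm hrq hgap ?_ (hgood.resolve_left hlong)
      nlinarith
  rw [le_div_iff₀ hpos, hint]
  calc _ = 4 * α ^ 2 * (C ^ 4 / (96 * π ^ 2) * ∫ r in zm..zp, r⁻¹) := by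
        field_simp; ring
    _ ≤ _ := by gcongr
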